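/- Let F : [a,b]ⁿ → S_m be continuous, c ∈ ℝⁿ with positive entries, and λ > 0, n ≥ 2, such that for all σ, τ ∈ [a,b]ⁿ: λ_max(F(τ) − F(σ)) < λ‖τ−σ‖_{c,∞}/(n-1) implies cᵀτ > cᵀσ, where ‖d‖_{c,∞} := max_j c_j|d_j|. Let σ̂ ∈ [a,b]ⁿ, Ŷ := F(σ̂), δ > 0, and Y^δ ∈ S_m with ‖Y^δ − Ŷ‖₂ ≤ δ (spectral norm). Then: (i) the set {σ ∈ [a,b]ⁿ : F(σ) ⪯ Y^δ + δI} is nonempty and compact, so a minimizer σ^δ of cᵀσ over it exists; and (ii) every such minimizer satisfies ‖σ^δ − σ̂‖_{c,∞} ≤ 2(n-1)δ/λ. -/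

import Mathlib

open Matrix

/-- Largest eigenvalue of a symmetric matrix as supremum of the quadratic form
over unit vectors. -/
noncomputable def lamMax {m : ℕ} (A : Matrix (Fin m) (Fin m) ℝ) : ℝ :=
  sSup {r : ℝ | ∃ x : Fin m → ℝ, x ⬝ᵥ x = 1 ∧ r = x ⬝ᵥ A.mulVec x}

/-- Spectral norm of a symmetric matrix as supremum of the absolute value of the
quadratic form over unit vectors. -/
noncomputable def specNorm {m : ℕ} (A : Matrix (Fin m) (Fin m) ℝ) : ℝ :=
  sSup {r : ℝ | ∃ x : Fin m → ℝ, x ⬝ᵥ x = 1 ∧ r = |x ⬝ᵥ A.mulVec x|}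

/-!
`specNorm (Yδ - F σhat) ≤ δ` says that `-δ I ≤ Yδ - F σhat ≤ δ I`. The left inequality makes
`σhat` feasible for the constraint `F σ ≤ Yδ + δ I`. For a feasible `σ` the right one gives
`F σ - F σhat ≤ 2 δ I`, so `lamMax (F σ - F σhat) ≤ 2 δ`. Were a minimizer farther than `2 δ / κ`
from `σhat`, with `κ = lam / (n - 1)`, the hypothesis would make its cost exceed that of the
feasible point `σhat`.
-/

section QuadraticForm

variable {ι : Type*} [Fintype ι] (A : Matrix ι ι ℝ)

open scoped Matrix.Norms.L2Operator in
lemma abs_dotProduct_mulVec_le_l2_opNorm [DecidableEq ι] (x : ι → ℝ) :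
    |x ⬝ᵥ A *ᵥ x| ≤ ‖A‖ * (x ⬝ᵥ x) := by
  set v : EuclideanSpace ℝ ι := WithLp.toLp 2 x
  set w : EuclideanSpace ℝ ι := WithLp.toLp 2 (A *ᵥ x)
  have hinner : x ⬝ᵥ A *ᵥ x = inner ℝ v w := by
    rw [EuclideanSpace.inner_toLp_toLp, star_trivial, dotProduct_comm]
  have hnorm : x ⬝ᵥ x = ‖v‖ * ‖v‖ := by
    rw [← real_inner_self_eq_norm_mul_norm, EuclideanSpace.inner_toLp_toLp, star_trivial]
  calc |x ⬝ᵥ A *ᵥ x| ≤ ‖v‖ * ‖w‖ := hinner ▸ abs_real_inner_le_norm v w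
    _ ≤ ‖v‖ * (‖A‖ * ‖v‖) := by gcongr; exact l2_opNorm_mulVec A v
    _ = ‖A‖ * (x ⬝ᵥ x) := by rw [hnorm]; ring

variable {A}

lemma dotProduct_mulVec_le_of_forall_unit {t : ℝ} (h : ∀ u, u ⬝ᵥ u = 1 → u ⬝ᵥ A *ᵥ u ≤ t)
    (x : ι → ℝ) : x ⬝ᵥ A *ᵥ x ≤ t * (x ⬝ᵥ x) := by
  rcases eq_or_ne x 0 with rfl | hx
  · simp
  have hpos : 0 < x ⬝ᵥ x := by simpa using dotProduct_star_self_pos_iff.mpr hx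
  set r := √(x ⬝ᵥ x)
  have hr : r⁻¹ * r⁻¹ = (x ⬝ᵥ x)⁻¹ := by rw [← mul_inv, Real.mul_self_sqrt hpos.le]
  have hunit : (r⁻¹ • x) ⬝ᵥ (r⁻¹ • x) = 1 := by
    rw [smul_dotProduct, dotProduct_smul, smul_smul, hr, smul_eq_mul, inv_mul_cancel₀ hpos.ne']
  have hbound := h _ hunit
  rwa [mulVec_smul, smul_dotProduct, dotProduct_smul, smul_smul, hr, smul_eq_mul,
    inv_mul_le_iff₀ hpos, mul_comm] at hbound

end QuadraticForm

section LoewnerOrder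

open scoped MatrixOrder

variable {ι : Type*}

lemma le_smul_one_iff_isHermitian_and_forall_unit [Fintype ι] [DecidableEq ι]
    {A : Matrix ι ι ℝ} {t : ℝ} :
    A ≤ t • 1 ↔ A.IsHermitian ∧ ∀ u, u ⬝ᵥ u = 1 → u ⬝ᵥ A *ᵥ u ≤ t := by
  have hone : (t • (1 : Matrix ι ι ℝ)).IsHermitian := isHermitian_one.smul (.all t)
  have hquad (x : ι → ℝ) : x ⬝ᵥ (t • 1 - A) *ᵥ x = t * (x ⬝ᵥ x) - x ⬝ᵥ A *ᵥ x := by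
    rw [sub_mulVec, smul_mulVec, one_mulVec, dotProduct_sub, dotProduct_smul, smul_eq_mul]
  simp only [Matrix.le_iff, posSemidef_iff_dotProduct_mulVec, star_trivial, hquad, sub_nonneg]
  exact ⟨fun ⟨hA, h⟩ ↦ ⟨by simpa using hone.sub hA, fun u hu ↦ by simpa [hu] using h u⟩,
    fun ⟨hA, h⟩ ↦ ⟨hone.sub hA, dotProduct_mulVec_le_of_forall_unit h⟩⟩

lemma isClosed_Iic_matrix [Finite ι] (B : Matrix ι ι ℝ) : IsClosed (Set.Iic B) := by
  cases nonempty_fintype ι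
  simp only [Set.Iic, Matrix.le_iff, posSemidef_iff_dotProduct_mulVec, star_trivial, IsHermitian,
    Set.ofPred_and, Set.ofPred_forall]
  exact (isClosed_eq (by fun_prop) (by fun_prop)).inter <|
    isClosed_iInter fun x ↦ isClosed_le (by fun_prop) (by fun_prop)

end LoewnerOrder

section ExtremalEigenvalues

open scoped MatrixOrder

variable {m : ℕ} {A : Matrix (Fin m) (Fin m) ℝ} {t : ℝ}

lemma lamMax_le_of_le_smul_one (ht : 0 ≤ t) (h : A ≤ t • 1) : lamMax A ≤ t := by
  refine Real.sSup_le ?_ ht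
  rintro _ ⟨u, hu, rfl⟩
  exact (le_smul_one_iff_isHermitian_and_forall_unit.mp h).2 u hu

lemma specNorm_nonneg (A : Matrix (Fin m) (Fin m) ℝ) : 0 ≤ specNorm A :=
  Real.sSup_nonneg <| by rintro _ ⟨u, -, rfl⟩; exact abs_nonneg _

lemma specNorm_neg (A : Matrix (Fin m) (Fin m) ℝ) : specNorm (-A) = specNorm A := by
  simp only [specNorm, neg_mulVec, dotProduct_neg, abs_neg]

open scoped Matrix.Norms.L2Operator in
lemma abs_dotProduct_mulVec_le_specNorm (A : Matrix (Fin m) (Fin m) ℝ) {u : Fin m → ℝ}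
    (hu : u ⬝ᵥ u = 1) : |u ⬝ᵥ A *ᵥ u| ≤ specNorm A := by
  refine le_csSup ⟨‖A‖, ?_⟩ ⟨u, hu, rfl⟩
  rintro _ ⟨v, hv, rfl⟩
  simpa [hv] using abs_dotProduct_mulVec_le_l2_opNorm A v

lemma le_smul_one_of_specNorm_le (hA : A.IsHermitian) (h : specNorm A ≤ t) : A ≤ t • 1 :=
  le_smul_one_iff_isHermitian_and_forall_unit.mpr
    ⟨hA, fun _ hu ↦ (le_abs_self _).trans <| (abs_dotProduct_mulVec_le_specNorm A hu).trans h⟩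

lemma neg_smul_one_le_of_specNorm_le (hA : A.IsHermitian) (h : specNorm A ≤ t) :
    -(t • 1) ≤ A :=
  neg_le.mp <| le_smul_one_of_specNorm_le hA.neg <| (specNorm_neg A).trans_le h

lemma le_add_smul_one_of_specNorm_sub_le {Y Z : Matrix (Fin m) (Fin m) ℝ}
    (hYZ : (Y - Z).IsHermitian) (h : specNorm (Y - Z) ≤ t) : Z ≤ Y + t • 1 := by
  have hlower := neg_smul_one_le_of_specNorm_le hYZ h
  rwa [neg_le, neg_sub, sub_le_iff_le_add'] at hlower

lemma lamMax_sub_le_two_mul_of_specNorm_sub_le {W Y Z : Matrix (Fin m) (Fin m) ℝ}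
    (hYZ : (Y - Z).IsHermitian) (h : specNorm (Y - Z) ≤ t) (hW : W ≤ Y + t • 1) :
    lamMax (W - Z) ≤ 2 * t := by
  refine lamMax_le_of_le_smul_one (mul_nonneg zero_le_two ((specNorm_nonneg _).trans h)) ?_
  calc W - Z ≤ (Y + t • 1) - Z := sub_le_sub_right hW Z
    _ = (Y - Z) + t • 1 := add_sub_right_comm _ _ _
    _ ≤ t • 1 + t • 1 := add_le_add_left (le_smul_one_of_specNorm_le hYZ h) _
    _ = (2 * t) • 1 := by rw [two_mul, add_smul]

end ExtremalEigenvalues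

section SemidefiniteProgram

open scoped MatrixOrder

variable {X ι : Type*}

/-- The feasible set of a semidefinite program over `K` with constraint `F σ ⪯ B`; here `≤` is the
Loewner order. -/
def feasibleSet (K : Set X) (F : X → Matrix ι ι ℝ) (B : Matrix ι ι ℝ) : Set X :=
  {σ | σ ∈ K ∧ F σ ≤ B}

variable [TopologicalSpace X]

lemma isCompact_feasibleSet [Finite ι] {K : Set X} {F : X → Matrix ι ι ℝ} (hK : IsCompact K)
    (hF : ContinuousOn F K) (B : Matrix ι ι ℝ) : IsCompact (feasibleSet K F B) := by
  obtain ⟨C, hC, hFC⟩ := continuousOn_iff_isClosed.mp hF _ (isClosed_Iic_matrix B)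
  have hset : feasibleSet K F B = C ∩ K := hFC ▸ Set.inter_comm K (F ⁻¹' Set.Iic B)
  exact hset ▸ hK.inter_left hC

theorem stmt7_general {m : ℕ} {K : Set X} (hK : IsCompact K)
    {F : X → Matrix (Fin m) (Fin m) ℝ} (hF : ContinuousOn F K)
    {cost : X → ℝ} (hcost : LowerSemicontinuousOn cost K)
    {σhat : X} (hσhat : σhat ∈ K)
    {gauge : X → ℝ} {κ : ℝ} (hκ : 0 < κ)
    (hyp : ∀ τ ∈ K, lamMax (F τ - F σhat) < κ * gauge τ → cost σhat < cost τ)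
    {Y : Matrix (Fin m) (Fin m) ℝ} (hYsym : (Y - F σhat).IsHermitian)
    {δ : ℝ} (hnoise : specNorm (Y - F σhat) ≤ δ) :
    (feasibleSet K F (Y + δ • 1)).Nonempty ∧ IsCompact (feasibleSet K F (Y + δ • 1)) ∧
    (∃ σd ∈ feasibleSet K F (Y + δ • 1), IsMinOn cost (feasibleSet K F (Y + δ • 1)) σd) ∧
    ∀ σd ∈ feasibleSet K F (Y + δ • 1), IsMinOn cost (feasibleSet K F (Y + δ • 1)) σd →
      gauge σd ≤ 2 * δ / κ := by
  have hfeasible : σhat ∈ feasibleSet K F (Y + δ • 1) :=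
    ⟨hσhat, le_add_smul_one_of_specNorm_sub_le hYsym hnoise⟩
  have hcompact := isCompact_feasibleSet hK hF (Y + δ • 1)
  refine ⟨⟨σhat, hfeasible⟩, hcompact,
    (hcost.mono fun _ h ↦ h.1).exists_isMinOn ⟨σhat, hfeasible⟩ hcompact,
    fun σd hσd hmin ↦ ?_⟩
  by_contra! hfar
  have hclose : lamMax (F σd - F σhat) ≤ 2 * δ :=
    lamMax_sub_le_two_mul_of_specNorm_sub_le hYsym hnoise hσd.2
  exact (hyp σd hσd.1 (hclose.trans_lt ((div_lt_iff₀' hκ).mp hfar))).not_ge (hmin hfeasible)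

end SemidefiniteProgram

theorem stmt7 (n m : ℕ) (hn : 2 ≤ n) (a b : ℝ) (hab : a < b)
    (hne : (Finset.univ : Finset (Fin n)).Nonempty)
    (F : (Fin n → ℝ) → Matrix (Fin m) (Fin m) ℝ)
    (hF : ContinuousOn F (Set.Icc (fun _ => a) (fun _ => b)))
    (hFsym : ∀ σ ∈ Set.Icc (fun _ => a : Fin n → ℝ) (fun _ => b), (F σ).IsHermitian)
    (c : Fin n → ℝ) (hc : ∀ j, 0 < c j) (lam : ℝ) (hlam : 0 < lam)
    (hyp : ∀ σ ∈ Set.Icc (fun _ => a : Fin n → ℝ) (fun _ => b),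
      ∀ τ ∈ Set.Icc (fun _ => a : Fin n → ℝ) (fun _ => b),
        lamMax (F τ - F σ) <
          lam * (Finset.univ.sup' hne fun j => c j * |τ j - σ j|) / (n - 1 : ℝ) →
        c ⬝ᵥ σ < c ⬝ᵥ τ)
    (σhat : Fin n → ℝ)
    (hσhat : σhat ∈ Set.Icc (fun _ => a : Fin n → ℝ) (fun _ => b))
    (δ : ℝ) (hδ : 0 < δ)
    (Yδ : Matrix (Fin m) (Fin m) ℝ) (hYsym : Yδ.IsHermitian)
    (hnoise : specNorm (Yδ - F σhat) ≤ δ) :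
    {σ | σ ∈ Set.Icc (fun _ => a : Fin n → ℝ) (fun _ => b) ∧
        (Yδ + δ • (1 : Matrix (Fin m) (Fin m) ℝ) - F σ).PosSemidef}.Nonempty ∧
    IsCompact {σ | σ ∈ Set.Icc (fun _ => a : Fin n → ℝ) (fun _ => b) ∧
        (Yδ + δ • (1 : Matrix (Fin m) (Fin m) ℝ) - F σ).PosSemidef} ∧
    (∃ σd ∈ {σ | σ ∈ Set.Icc (fun _ => a : Fin n → ℝ) (fun _ => b) ∧
        (Yδ + δ • (1 : Matrix (Fin m) (Fin m) ℝ) - F σ).PosSemidef},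
      ∀ σ ∈ {σ | σ ∈ Set.Icc (fun _ => a : Fin n → ℝ) (fun _ => b) ∧
        (Yδ + δ • (1 : Matrix (Fin m) (Fin m) ℝ) - F σ).PosSemidef},
        c ⬝ᵥ σd ≤ c ⬝ᵥ σ) ∧
    (∀ σd ∈ {σ | σ ∈ Set.Icc (fun _ => a : Fin n → ℝ) (fun _ => b) ∧
        (Yδ + δ • (1 : Matrix (Fin m) (Fin m) ℝ) - F σ).PosSemidef},
      (∀ σ ∈ {σ | σ ∈ Set.Icc (fun _ => a : Fin n → ℝ) (fun _ => b) ∧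
        (Yδ + δ • (1 : Matrix (Fin m) (Fin m) ℝ) - F σ).PosSemidef},
          c ⬝ᵥ σd ≤ c ⬝ᵥ σ) →
      Finset.univ.sup' hne (fun j => c j * |σd j - σhat j|) ≤
        2 * (n - 1 : ℝ) * δ / lam) := by
  have hpred : (0 : ℝ) < n - 1 := sub_pos.mpr (by exact_mod_cast hn)
  have hcost : Continuous fun σ ↦ c ⬝ᵥ σ := continuous_const.dotProduct continuous_id
  rw [show 2 * (n - 1 : ℝ) * δ / lam = 2 * δ / (lam / (n - 1)) by field_simp]
  exact stmt7_general isCompact_Icc hF (hcost.lowerSemicontinuous.lowerSemicontinuousOn _) hσhat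
    (div_pos hlam hpred) (fun τ hτ h ↦ hyp σhat hσhat τ hτ (by rwa [mul_div_right_comm]))
    (hYsym.sub (hFsym _ hσhat)) hnoise
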